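/- Let g be a finite-dimensional Lie algebra over a field of characteristic zero. If the Killing form of g is nondegenerate, then every finite-dimensional representation of g is completely reducible. -/

import Mathlib

/-!
The heart of the matter is Whitehead's first lemma: over a semisimple Lie algebra `g` every
derivation `D : g → V` into a finite-dimensional module is inner. By the long exact sequence one may
take `V` irreducible. If the trace form of `V` vanishes, Cartan's criterion makes `V` trivial, and
`D` vanishes on `g = ⁅g, g⁆`. Otherwise the trace form is nondegenerate on an ideal `J ≠ ⊥`, and its
inverse is an invariant tensor `t = ∑ eᵢ ⊗ fᵢ ∈ J ⊗ J`. The Casimir operator `Ω = ∑ eᵢ fᵢ` of `V`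
commutes with `g` and has trace `dim J ≠ 0`, so it is invertible; since `x · ∑ eᵢ · D fᵢ = Ω (D x)`,
the derivation `D` is inner with primitive `Ω⁻¹ (∑ eᵢ · D fᵢ)`.

Hence taking `g`-invariants is exact. Applied to the restriction map `Hom(M, N) → Hom(N, N)` this
lifts the identity of `N` to an equivariant projection `M → N`, whose kernel is the complement.
-/

open LieModule LieAlgebra Module
open scoped TensorProduct

section Derivations

variable {R L V W : Type*} [CommRing R] [LieRing L] [LieAlgebra R L]
  [AddCommGroup V] [Module R V] [LieRingModule L V] [LieModule R L V]
  [AddCommGroup W] [Module R W] [LieRingModule L W] [LieModule R L W]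

lemma exists_mem_inner_eq_of_forall_apply_mem {N : LieSubmodule R L V}
    (hN : Function.Surjective (LieDerivation.inner R L N)) (D : LieDerivation R L V)
    (hD : ∀ x, D x ∈ N) : ∃ v ∈ N, LieDerivation.inner R L V v = D := by
  let D' : LieDerivation R L N :=
    { toLinearMap := (D : L →ₗ[R] V).codRestrict N.toSubmodule hD
      leibniz' := fun x y => Subtype.ext (D.apply_lie_eq_sub x y) }
  obtain ⟨v, hv⟩ := hN D'
  exact ⟨v, v.2, LieDerivation.ext fun x => congrArg Subtype.val (LieDerivation.congr_fun hv x)⟩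

lemma maxTrivHom_surjective_of_inner_ker_surjective {f : V →ₗ⁅R,L⁆ W} (hf : Function.Surjective f)
    (hker : Function.Surjective (LieDerivation.inner R L f.ker)) :
    Function.Surjective (maxTrivHom f) := by
  rintro ⟨w, hw⟩
  obtain ⟨v, rfl⟩ := hf w
  have lie_mem_ker (x : L) : LieDerivation.inner R L V v x ∈ f.ker := by
    simpa using hw x
  obtain ⟨u, hu, huv⟩ := exists_mem_inner_eq_of_forall_apply_mem hker _ lie_mem_ker
  have lie_eq (x : L) : ⁅x, u⁆ = ⁅x, v⁆ := LieDerivation.congr_fun huv x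
  refine ⟨⟨v - u, fun x => by rw [lie_sub, lie_eq, sub_self]⟩, Subtype.ext ?_⟩
  rw [coe_maxTrivHom_apply, map_sub, LieModuleHom.mem_ker.mp hu, sub_zero]

lemma inner_surjective_of_inner_ker_surjective {f : V →ₗ⁅R,L⁆ W} (hf : Function.Surjective f)
    (hker : Function.Surjective (LieDerivation.inner R L f.ker))
    (hW : Function.Surjective (LieDerivation.inner R L W)) :
    Function.Surjective (LieDerivation.inner R L V) := by
  intro D
  let fD : LieDerivation R L W :=
    { toLinearMap := (f : V →ₗ[R] W) ∘ₗ (D : L →ₗ[R] V)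
      leibniz' := fun x y => by simp }
  obtain ⟨w, hw⟩ := hW fD
  obtain ⟨v, rfl⟩ := hf w
  have sub_mem_ker (x : L) : (D - LieDerivation.inner R L V v) x ∈ f.ker := by
    have hx : ⁅x, f v⁆ = f (D x) := LieDerivation.congr_fun hw x
    simp [LieDerivation.sub_apply, hx]
  obtain ⟨u, -, hu⟩ := exists_mem_inner_eq_of_forall_apply_mem hker _ sub_mem_ker
  exact ⟨u + v, by rw [map_add, hu, sub_add_cancel]⟩

end Derivations

section Casimir

variable {R L : Type*} [CommRing R] [LieRing L] [LieAlgebra R L]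

variable (R L) in
/-- The operator `∑ eᵢ fᵢ` on a Lie module `V` attached to a tensor `∑ eᵢ ⊗ fᵢ`. For the tensor
inverse to a nondegenerate invariant form on `L`, this is the Casimir operator of that form. -/
noncomputable def casimirOperator (V : Type*) [AddCommGroup V] [Module R V] [LieRingModule L V]
    [LieModule R L V] : L ⊗[R] L →ₗ[R] End R V :=
  TensorProduct.lift
    ((LinearMap.mul R (End R V)).compl₁₂ (toEnd R L V : L →ₗ[R] End R V) (toEnd R L V))

variable {V : Type*} [AddCommGroup V] [Module R V] [LieRingModule L V] [LieModule R L V]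

@[simp]
lemma casimirOperator_tmul_apply (x y : L) (v : V) :
    casimirOperator R L V (x ⊗ₜ y) v = ⁅x, ⁅y, v⁆⁆ :=
  rfl

lemma trace_casimirOperator (t : L ⊗[R] L) :
    LinearMap.trace R V (casimirOperator R L V t) = TensorProduct.lift (traceForm R L V) t := by
  induction t with
  | zero => simp
  | tmul x y => rfl
  | add s t hs ht => simp [hs, ht]

lemma toModuleHom_lTensor_inner (t : L ⊗[R] L) (v : V) :
    toModuleHom R L V ((LieDerivation.inner R L V v : L →ₗ[R] V).lTensor L t) =
      casimirOperator R L V t v := by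
  induction t with
  | zero => simp
  | tmul x y => simp
  | add s t hs ht => simp [hs, ht]

lemma lie_toModuleHom_lTensor (D : LieDerivation R L V) (x : L) (t : L ⊗[R] L) :
    ⁅x, toModuleHom R L V ((D : L →ₗ[R] V).lTensor L t)⁆ =
      toModuleHom R L V ((D : L →ₗ[R] V).lTensor L ⁅x, t⁆) + casimirOperator R L V t (D x) := by
  induction t with
  | zero => simp
  | tmul y z =>
    suffices ⁅x, ⁅y, D z⁆⁆ = ⁅⁅x, y⁆, D z⁆ + ⁅y, D ⁅x, z⁆⁆ + ⁅y, ⁅z, D x⁆⁆ by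
      simpa only [TensorProduct.LieModule.lie_tmul_right, map_add, LinearMap.lTensor_tmul,
        toModuleHom_apply, casimirOperator_tmul_apply, LieDerivation.coeFn_coe] using this
    rw [leibniz_lie x y, D.apply_lie_eq_sub, lie_sub]
    abel
  | add s t hs ht =>
    simp only [map_add, lie_add, hs, ht, LinearMap.add_apply]
    abel

lemma lie_toModuleHom_lTensor_of_mem_maxTrivSubmodule (D : LieDerivation R L V) (x : L)
    {t : L ⊗[R] L} (ht : t ∈ maxTrivSubmodule R L (L ⊗[R] L)) :
    ⁅x, toModuleHom R L V ((D : L →ₗ[R] V).lTensor L t)⁆ = casimirOperator R L V t (D x) := by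
  rw [lie_toModuleHom_lTensor, ht x, map_zero, map_zero, zero_add]

lemma lie_casimirOperator_apply {t : L ⊗[R] L} (ht : t ∈ maxTrivSubmodule R L (L ⊗[R] L))
    (x : L) (v : V) :
    ⁅x, casimirOperator R L V t v⁆ = casimirOperator R L V t ⁅x, v⁆ := by
  rw [← toModuleHom_lTensor_inner, lie_toModuleHom_lTensor_of_mem_maxTrivSubmodule _ _ ht,
    LieDerivation.inner_apply_apply]

lemma inner_surjective_of_casimirOperator_bijective {t : L ⊗[R] L}
    (ht : t ∈ maxTrivSubmodule R L (L ⊗[R] L))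
    (hbij : Function.Bijective (casimirOperator R L V t)) :
    Function.Surjective (LieDerivation.inner R L V) := by
  intro D
  obtain ⟨v, hv⟩ := hbij.surjective (toModuleHom R L V ((D : L →ₗ[R] V).lTensor L t))
  refine ⟨v, LieDerivation.ext fun x => hbij.injective ?_⟩
  calc casimirOperator R L V t ⁅x, v⁆
      = ⁅x, casimirOperator R L V t v⁆ := (lie_casimirOperator_apply ht x v).symm
    _ = casimirOperator R L V t (D x) := by
      rw [hv, lie_toModuleHom_lTensor_of_mem_maxTrivSubmodule D x ht]

end Casimir

section InvariantTensor

/-- The map `M ⊗ M → End M` given by a bilinear form `Φ`, sending `m ⊗ n` to `p ↦ Φ m p • n`. When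
`Φ` is nondegenerate, the preimage of the identity is the tensor inverse to `Φ`. -/
noncomputable def tensorToEnd {R M : Type*} [CommRing R] [AddCommGroup M] [Module R M]
    (Φ : LinearMap.BilinForm R M) : M ⊗[R] M →ₗ[R] End R M :=
  dualTensorHom R M M ∘ₗ Φ.rTensor M

lemma trace_tensorToEnd {R M : Type*} [CommRing R] [AddCommGroup M] [Module R M]
    [Module.Free R M] [Module.Finite R M] (Φ : LinearMap.BilinForm R M) (t : M ⊗[R] M) :
    LinearMap.trace R M (tensorToEnd Φ t) = TensorProduct.lift Φ t := by
  rw [tensorToEnd, LinearMap.comp_apply, LinearMap.trace_eq_contract_apply]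
  induction t with
  | zero => simp
  | tmul m n => simp
  | add s t hs ht => simp [hs, ht]

lemma tensorToEnd_lie {R L M : Type*} [CommRing R] [LieRing L] [LieAlgebra R L]
    [AddCommGroup M] [Module R M] [LieRingModule L M] [LieModule R L M]
    {Φ : LinearMap.BilinForm R M} (hΦ : Φ.lieInvariant L) (x : L) (t : M ⊗[R] M) :
    tensorToEnd Φ ⁅x, t⁆ = ⁅x, tensorToEnd Φ t⁆ := by
  induction t with
  | zero => simp
  | tmul m n =>
    ext p
    simp [tensorToEnd, hΦ x m, LieHom.lie_apply, neg_add_eq_sub]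
  | add s t hs ht => simp [hs, ht]

lemma tensorToEnd_bijective {k M : Type*} [Field k] [AddCommGroup M] [Module k M]
    [FiniteDimensional k M] {Φ : LinearMap.BilinForm k M} (hΦ : Φ.Nondegenerate) :
    Function.Bijective (tensorToEnd Φ) :=
  ((TensorProduct.congr (Φ.toDual hΦ) (LinearEquiv.refl k M)).trans
    (dualTensorHomEquiv k M M)).bijective

lemma exists_mem_maxTrivSubmodule_lift_eq_finrank {k L M : Type*} [Field k] [LieRing L]
    [LieAlgebra k L] [AddCommGroup M] [Module k M] [LieRingModule L M] [LieModule k L M]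
    [FiniteDimensional k M] {Φ : LinearMap.BilinForm k M}
    (hinv : Φ.lieInvariant L) (hΦ : Φ.Nondegenerate) :
    ∃ t ∈ maxTrivSubmodule k L (M ⊗[k] M), TensorProduct.lift Φ t = finrank k M := by
  obtain ⟨t, ht⟩ := (tensorToEnd_bijective hΦ).surjective LinearMap.id
  refine ⟨t, fun x => (tensorToEnd_bijective hΦ).injective ?_, ?_⟩
  · ext m
    simp [tensorToEnd_lie hinv, ht, LieHom.lie_apply]
  · rw [← trace_tensorToEnd, ht, LinearMap.trace_id]

end InvariantTensor

section Semisimple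

lemma derivedSeries_one_eq_top (R L : Type*) [CommRing R] [LieRing L] [LieAlgebra R L]
    [IsSemisimple R L] : derivedSeries R L 1 = ⊤ := by
  obtain ⟨C, hC⟩ := exists_isCompl (derivedSeries R L 1)
  have hab : IsLieAbelian C := by
    refine ⟨fun x y => Subtype.ext ?_⟩
    have : ⁅(x : L), (y : L)⁆ ∈ derivedSeries R L 1 ⊓ C :=
      ⟨LieSubmodule.lie_mem_lie (LieSubmodule.mem_top _) (LieSubmodule.mem_top _), C.lie_mem y.2⟩
    rw [hC.inf_eq_bot] at this
    simpa using this
  have := HasTrivialRadical.eq_bot_of_isSolvable (R := R) C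
  simpa [this] using hC.sup_eq_top

lemma exists_lieIdeal_restrict_nondegenerate {k L : Type*} [Field k] [LieRing L] [LieAlgebra k L]
    [IsSemisimple k L] {Φ : LinearMap.BilinForm k L} (hinv : Φ.lieInvariant L)
    (hsymm : LinearMap.IsSymm Φ) (hΦ : Φ ≠ 0) :
    ∃ J : LieIdeal k L, J ≠ ⊥ ∧ (Φ.restrict J.toSubmodule).Nondegenerate := by
  have hker : (InvariantForm.orthogonal Φ hinv ⊤).toSubmodule = LinearMap.ker Φ := by
    simpa using LinearMap.BilinForm.orthogonal_top_eq_ker hsymm.isRefl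
  obtain ⟨J, hJ⟩ := exists_isCompl (InvariantForm.orthogonal Φ hinv ⊤ : LieIdeal k L)
  refine ⟨J, ?_, hsymm.nondegenerate_restrict_of_isCompl_ker ?_⟩
  · rintro rfl
    apply hΦ
    rw [← LinearMap.ker_eq_top, ← hker, eq_top_of_isCompl_bot hJ]
    rfl
  · rw [← hker]
    exact LieSubmodule.isCompl_toSubmodule.mpr hJ.symm

lemma exists_mem_maxTrivSubmodule_lift_ne_zero {k L : Type*} [Field k] [CharZero k] [LieRing L]
    [LieAlgebra k L] [FiniteDimensional k L] [IsSemisimple k L] {Φ : LinearMap.BilinForm k L}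
    (hinv : Φ.lieInvariant L) (hsymm : LinearMap.IsSymm Φ) (hΦ : Φ ≠ 0) :
    ∃ t ∈ maxTrivSubmodule k L (L ⊗[k] L), TensorProduct.lift Φ t ≠ 0 := by
  obtain ⟨J, hJ, hnd⟩ := exists_lieIdeal_restrict_nondegenerate hinv hsymm hΦ
  have hinvJ : LinearMap.BilinForm.lieInvariant (M := J) L (Φ.restrict J.toSubmodule) :=
    fun x y z => hinv x y z
  obtain ⟨t, ht, hlift⟩ := exists_mem_maxTrivSubmodule_lift_eq_finrank (M := J) hinvJ hnd
  have lift_mapIncl : TensorProduct.lift Φ (TensorProduct.LieModule.mapIncl J J t) =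
      TensorProduct.lift (Φ.restrict J.toSubmodule) t := by
    clear ht hlift
    induction t with
    | zero => simp
    | tmul x y => rfl
    | add s t hs ht => simp only [map_add, hs, ht]
  refine ⟨TensorProduct.LieModule.mapIncl J J t,
    (maxTrivHom (TensorProduct.LieModule.mapIncl J J) ⟨t, ht⟩).2, ?_⟩
  rw [lift_mapIncl, hlift, Nat.cast_ne_zero]
  exact fun h => hJ (by simpa using Submodule.finrank_eq_zero.mp h)

end Semisimple

section Whitehead

lemma bijective_of_isIrreducible {R L V W : Type*} [CommRing R] [LieRing L]
    [AddCommGroup V] [Module R V] [LieRingModule L V] [IsIrreducible R L V]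
    [AddCommGroup W] [Module R W] [LieRingModule L W] [IsIrreducible R L W]
    {f : V →ₗ⁅R,L⁆ W} (hf : f ≠ 0) : Function.Bijective f := by
  have hker : f.ker = ⊥ := (IsSimpleOrder.eq_bot_or_eq_top f.ker).resolve_right fun h =>
    hf (LieModuleHom.ext fun v => LieModuleHom.mem_ker.mp (h ▸ LieSubmodule.mem_top v))
  have hrange : f.range = ⊤ := (IsSimpleOrder.eq_bot_or_eq_top f.range).resolve_left fun h =>
    hf (LieModuleHom.ext fun v => by simpa [h] using (f.mem_range _).mpr ⟨v, rfl⟩)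
  exact ⟨(LieModuleHom.ker_eq_bot f).mp hker, (LieModuleHom.range_eq_top f).mp hrange⟩

lemma isTrivial_of_traceForm_eq_zero {k L V : Type*} [Field k] [CharZero k] [LieRing L]
    [LieAlgebra k L] [IsSemisimple k L] [AddCommGroup V] [Module k V] [LieRingModule L V]
    [LieModule k L V] [FiniteDimensional k V] [IsIrreducible k L V]
    (h : traceForm k L V = 0) : IsTrivial L V := by
  have : Nontrivial V := nontrivial_of_isIrreducible k L V
  have : LieModule.IsNilpotent (derivedSeries k L 1) V :=
    isNilpotent_derivedSeries_of_traceForm_eq_zero h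
  have : LieModule.IsNilpotent L V := by
    rw [derivedSeries_one_eq_top] at this
    exact (isNilpotent_of_top_iff (R := k)).mp this
  have : Nontrivial (maxTrivSubmodule k L V) := nontrivial_max_triv_of_isNilpotent k L V
  rw [isTrivial_iff_max_triv_eq_top k]
  exact LieSubmodule.eq_top_of_isIrreducible _ _ _ _

lemma lieDerivation_eq_zero_of_isTrivial {R L V : Type*} [CommRing R] [LieRing L] [LieAlgebra R L]
    [IsSemisimple R L] [AddCommGroup V] [Module R V] [LieRingModule L V] [LieModule R L V]
    [IsTrivial L V] (D : LieDerivation R L V) : D = 0 := by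
  have hD : (derivedSeries R L 1).toSubmodule ≤ LinearMap.ker (D : L →ₗ[R] V) := by
    rw [← LieIdeal.toLieSubalgebra_toSubmodule, coe_derivedSeries_one_eq, Submodule.span_le]
    rintro _ ⟨x, y, rfl⟩
    simp [trivial_lie_zero]
  rw [derivedSeries_one_eq_top] at hD
  exact LieDerivation.ext fun x => hD (Submodule.mem_top (x := x))

lemma inner_surjective_of_isIrreducible {k L V : Type*} [Field k] [CharZero k] [LieRing L]
    [LieAlgebra k L] [FiniteDimensional k L] [IsSemisimple k L] [AddCommGroup V] [Module k V]
    [LieRingModule L V] [LieModule k L V] [FiniteDimensional k V] [IsIrreducible k L V] :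
    Function.Surjective (LieDerivation.inner k L V) := by
  by_cases hV : traceForm k L V = 0
  · have := isTrivial_of_traceForm_eq_zero hV
    exact fun D => ⟨0, by rw [map_zero, lieDerivation_eq_zero_of_isTrivial D]⟩
  · obtain ⟨t, ht, hlift⟩ := exists_mem_maxTrivSubmodule_lift_ne_zero
      (traceForm_lieInvariant k L V) (traceForm_isSymm k L V) hV
    let Ω : V →ₗ⁅k,L⁆ V :=
      { casimirOperator k L V t with map_lie' := (lie_casimirOperator_apply ht _ _).symm }
    have hΩ : Ω ≠ 0 := by
      intro h
      have hzero : casimirOperator k L V t = 0 := congrArg LieModuleHom.toLinearMap h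
      rw [← trace_casimirOperator, hzero, map_zero] at hlift
      exact hlift rfl
    exact inner_surjective_of_casimirOperator_bijective ht (bijective_of_isIrreducible hΩ)

theorem inner_surjective {k L : Type*} [Field k] [CharZero k] [LieRing L] [LieAlgebra k L]
    [FiniteDimensional k L] [IsSemisimple k L] (V : Type*) [AddCommGroup V] [Module k V]
    [LieRingModule L V] [LieModule k L V] [FiniteDimensional k V] :
    Function.Surjective (LieDerivation.inner k L V) := by
  induction hdim : finrank k V using Nat.strong_induction_on generalizing V with
  | _ n ih
  subst hdim
  rcases subsingleton_or_nontrivial V with _ | _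
  · exact fun D => ⟨0, LieDerivation.ext fun _ => Subsingleton.elim _ _⟩
  by_cases hirr : IsIrreducible k L V
  · exact inner_surjective_of_isIrreducible
  obtain ⟨N, hbot, htop⟩ : ∃ N : LieSubmodule k L V, N ≠ ⊥ ∧ N ≠ ⊤ := by
    by_contra! h
    exact hirr (.mk h)
  have : FiniteDimensional k (V ⧸ N) := inferInstanceAs (FiniteDimensional k (V ⧸ N.toSubmodule))
  have hN : finrank k N < finrank k V :=
    Submodule.finrank_lt (s := N.toSubmodule) (by simpa [lt_top_iff_ne_top] using htop)
  have hQ : finrank k (V ⧸ N) < finrank k V := by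
    have hadd : finrank k (V ⧸ N) + finrank k N = finrank k V :=
      N.toSubmodule.finrank_quotient_add_finrank
    have hpos : finrank k N ≠ 0 := fun h => hbot (by simpa using Submodule.finrank_eq_zero.mp h)
    lia
  refine inner_surjective_of_inner_ker_surjective (LieSubmodule.Quotient.surjective_mk' N) ?_
    (ih _ hQ (V ⧸ N) rfl)
  rw [LieSubmodule.Quotient.mk'_ker]
  exact ih _ hN N rfl

end Whitehead

section Restriction

/-- Precomposition with a morphism of Lie modules `f : M → N`, as a morphism of Lie modules
`Hom(N, P) → Hom(M, P)`. -/
def precompHom {R L M N : Type*} [CommRing R] [LieRing L] [LieAlgebra R L]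
    [AddCommGroup M] [Module R M] [LieRingModule L M] [LieModule R L M]
    [AddCommGroup N] [Module R N] [LieRingModule L N] [LieModule R L N]
    (P : Type*) [AddCommGroup P] [Module R P] [LieRingModule L P] [LieModule R L P]
    (f : M →ₗ⁅R,L⁆ N) : (N →ₗ[R] P) →ₗ⁅R,L⁆ (M →ₗ[R] P) where
  toLinearMap := LinearMap.lcomp R P (f : M →ₗ[R] N)
  map_lie' {x h} := by ext m; simp [LieHom.lie_apply]

lemma precompHom_incl_surjective {k L M : Type*} [Field k] [LieRing L] [LieAlgebra k L]
    [AddCommGroup M] [Module k M] [LieRingModule L M] [LieModule k L M] (N : LieSubmodule k L M)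
    (P : Type*) [AddCommGroup P] [Module k P] [LieRingModule L P] [LieModule k L P] :
    Function.Surjective (precompHom P N.incl) := by
  intro h
  exact LinearMap.exists_extend (p := N.toSubmodule) h

lemma exists_lieModuleHom_forall_apply_coe_eq {k L M : Type*} [Field k] [CharZero k] [LieRing L]
    [LieAlgebra k L] [FiniteDimensional k L] [IsSemisimple k L] [AddCommGroup M] [Module k M]
    [LieRingModule L M] [LieModule k L M] [FiniteDimensional k M] (N : LieSubmodule k L M) :
    ∃ π : M →ₗ⁅k,L⁆ N, ∀ n : N, π n = n := by
  have hsurj : Function.Surjective (maxTrivHom (precompHom N N.incl)) :=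
    maxTrivHom_surjective_of_inner_ker_surjective (precompHom_incl_surjective N N)
      (inner_surjective _)
  obtain ⟨π, hπ⟩ := hsurj (maxTrivLinearMapEquivLieModuleHom.symm LieModuleHom.id)
  exact ⟨maxTrivLinearMapEquivLieModuleHom π,
    fun n => LinearMap.congr_fun (congrArg Subtype.val hπ) n⟩

lemma isCompl_ker_of_forall_apply_coe_eq {R L M : Type*} [CommRing R] [LieRing L]
    [AddCommGroup M] [Module R M] [LieRingModule L M] {N : LieSubmodule R L M} {π : M →ₗ⁅R,L⁆ N}
    (hπ : ∀ n : N, π n = n) : IsCompl N π.ker :=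
  LieSubmodule.isCompl_toSubmodule.mp (LinearMap.isCompl_of_proj (f := (π : M →ₗ[R] N)) hπ)

end Restriction

lemma isKilling_of_killingForm_nondegenerate {R L : Type*} [CommRing R] [LieRing L] [LieAlgebra R L]
    (h : (killingForm R L).Nondegenerate) : IsKilling R L where
  killingCompl_top_eq_bot := by
    rw [← LieSubmodule.toSubmodule_inj]
    exact (LieIdeal.coe_killingCompl_top R L).trans h.ker_eq_bot

/-- Weyl's theorem: if the Killing form of a finite-dimensional Lie algebra `g` over a
field of characteristic zero is nondegenerate, then every finite-dimensional
representation of `g` is completely reducible (every Lie submodule has a complement). -/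
theorem stmt_4 (k : Type*) [Field k] [CharZero k]
    (g : Type*) [LieRing g] [LieAlgebra k g] [FiniteDimensional k g]
    (hKilling : (killingForm k g).Nondegenerate)
    (M : Type*) [AddCommGroup M] [Module k M] [LieRingModule g M] [LieModule k g M]
    [FiniteDimensional k M] :
    ∀ N : LieSubmodule k g M, ∃ N' : LieSubmodule k g M, IsCompl N N' := by
  intro N
  have : IsKilling k g := isKilling_of_killingForm_nondegenerate hKilling
  obtain ⟨π, hπ⟩ := exists_lieModuleHom_forall_apply_coe_eq N
  exact ⟨π.ker, isCompl_ker_of_forall_apply_coe_eq hπ⟩
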